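/- If ν is a Barabanov norm for 𝒜 with constant ρ and d ≥ 1, then there exists an infinite index sequence σ : ℕ → {0,…,m−1} such that for every n ≥ 1 the operator norm induced by ν of the product A_{σ_{n−1}}⋯A_{σ_1}A_{σ_0} is exactly ρ^n. -/

import Mathlib

/-!
Iterating the Barabanov identity bounds every product of length `n` by `ρ ^ n` in operator norm
(`nu_word_mulVec_le`). Since the family is finite, at every point `x` the maximum of `ν (A i x)` is
attained by some index; following such maximising indices from a fixed `x₀ ≠ 0` produces an orbit
with `ν (x_n) = ρ ^ n * ν x₀`, so the bound `ρ ^ n` is attained at `x₀` for all `n` simultaneously.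
-/

open Filter Topology

/-- `N` is a norm on `ℝ^d`. -/
structure IsNorm (d : ℕ) (N : (Fin d → ℝ) → ℝ) : Prop where
  eq_zero_iff : ∀ x, N x = 0 ↔ x = 0
  add_le : ∀ x y, N (x + y) ≤ N x + N y
  smul_eq : ∀ (a : ℝ) (x), N (a • x) = |a| * N x

/-- The operator norm of the matrix `B` induced by the norm `N` on `ℝ^d`. -/
noncomputable def opNorm {d : ℕ} (N : (Fin d → ℝ) → ℝ)
    (B : Matrix (Fin d) (Fin d) ℝ) : ℝ :=
  ⨆ x : {x : Fin d → ℝ // x ≠ 0}, N (B.mulVec x.1) / N x.1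

/-- The product `A_{σ_{n-1}} ⋯ A_{σ_1} A_{σ_0}`. -/
noncomputable def word {d m : ℕ} (A : Fin m → Matrix (Fin d) (Fin d) ℝ)
    (n : ℕ) (σ : Fin n → Fin m) : Matrix (Fin d) (Fin d) ℝ :=
  (List.ofFn fun i => A (σ i)).reverse.prod

/-- `ρ_n(𝒜) = max_σ ‖A_σ‖^{1/n}` with respect to the norm `N`. -/
noncomputable def rhoN {d m : ℕ} (N : (Fin d → ℝ) → ℝ)
    (A : Fin m → Matrix (Fin d) (Fin d) ℝ) (n : ℕ) : ℝ :=
  ⨆ σ : Fin n → Fin m, opNorm N (word A n σ) ^ ((n : ℝ)⁻¹)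

/-- The joint spectral radius `ρ(𝒜) = limsup_{n→∞} ρ_n(𝒜)`. -/
noncomputable def jsr {d m : ℕ} (N : (Fin d → ℝ) → ℝ)
    (A : Fin m → Matrix (Fin d) (Fin d) ℝ) : ℝ :=
  Filter.limsup (rhoN N A) Filter.atTop

/-- The spectral radius of a real square matrix: the maximum modulus of its
complex eigenvalues. -/
noncomputable def specRad {d : ℕ} (B : Matrix (Fin d) (Fin d) ℝ) : ℝ :=
  sSup ((fun μ => ‖μ‖) '' spectrum ℂ (B.map (fun t => (t : ℂ))))

/-- The family `𝒜` is irreducible: the only invariant subspaces are `{0}` and `ℝ^d`. -/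
def FamIrreducible {d m : ℕ} (A : Fin m → Matrix (Fin d) (Fin d) ℝ) : Prop :=
  ∀ V : Submodule ℝ (Fin d → ℝ),
    (∀ i : Fin m, ∀ x ∈ V, (A i).mulVec x ∈ V) → V = ⊥ ∨ V = ⊤

/-- `ν` is a Barabanov norm for the family `𝒜` with constant `ρ`:
`ρ·ν(x) = max_i ν(A_i x)` for all `x`. -/
def IsBarabanovNorm {d m : ℕ} (A : Fin m → Matrix (Fin d) (Fin d) ℝ)
    (ν : (Fin d → ℝ) → ℝ) (ρ : ℝ) : Prop :=
  IsNorm d ν ∧ 0 ≤ ρ ∧ ∀ x, ρ * ν x = ⨆ i : Fin m, ν ((A i).mulVec x)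

theorem IsNorm.nonneg {d : ℕ} {N : (Fin d → ℝ) → ℝ} (h : IsNorm d N) (x : Fin d → ℝ) :
    0 ≤ N x := by
  have h0 : N 0 = 0 := (h.eq_zero_iff 0).2 rfl
  have h1 := h.add_le x ((-1 : ℝ) • x)
  have h2 := h.smul_eq (-1) x
  have h3 : x + (-1 : ℝ) • x = 0 := by simp
  rw [h3, h0, h2] at h1
  norm_num at h1
  linarith

theorem IsNorm.pos {d : ℕ} {N : (Fin d → ℝ) → ℝ} (h : IsNorm d N) {x : Fin d → ℝ}
    (hx : x ≠ 0) : 0 < N x :=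
  lt_of_le_of_ne (h.nonneg x) fun h0 => hx ((h.eq_zero_iff x).1 h0.symm)

theorem word_succ_mulVec {d m : ℕ} (A : Fin m → Matrix (Fin d) (Fin d) ℝ) (σ : ℕ → Fin m)
    (n : ℕ) (x : Fin d → ℝ) :
    (word A (n + 1) (fun i => σ i.1)).mulVec x
      = (A (σ n)).mulVec ((word A n (fun i => σ i.1)).mulVec x) := by
  simp [word, List.ofFn_succ_last, -List.ofFn_succ, Matrix.mulVec_mulVec]

theorem nu_word_mulVec_le {d m : ℕ} {A : Fin m → Matrix (Fin d) (Fin d) ℝ}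
    {ν : (Fin d → ℝ) → ℝ} {ρ : ℝ} (hbar : IsBarabanovNorm A ν ρ) (σ : ℕ → Fin m) (n : ℕ)
    (x : Fin d → ℝ) :
    ν ((word A n (fun i => σ i.1)).mulVec x) ≤ ρ ^ n * ν x := by
  obtain ⟨-, hρ, hB⟩ := hbar
  induction n with
  | zero => simp [word]
  | succ n ih =>
    rw [word_succ_mulVec]
    calc _ ≤ ⨆ i, ν ((A i).mulVec ((word A n (fun i => σ i.1)).mulVec x)) :=
          le_ciSup (f := fun i => ν ((A i).mulVec ((word A n (fun i => σ i.1)).mulVec x)))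
            (Set.finite_range _).bddAbove (σ n)
      _ = ρ * ν ((word A n (fun i => σ i.1)).mulVec x) := (hB _).symm
      _ ≤ ρ * (ρ ^ n * ν x) := mul_le_mul_of_nonneg_left ih hρ
      _ = ρ ^ (n + 1) * ν x := by ring

/-- In a Barabanov norm there is an infinite index sequence along which all the
partial products have induced operator norm exactly `ρ^n`. -/
theorem stmt10 (d m : ℕ) (hd : 1 ≤ d) (hm : 1 ≤ m)
    (A : Fin m → Matrix (Fin d) (Fin d) ℝ)
    (ν : (Fin d → ℝ) → ℝ) (ρ : ℝ) (hbar : IsBarabanovNorm A ν ρ) :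
    ∃ σ : ℕ → Fin m, ∀ n : ℕ, 1 ≤ n →
      opNorm ν (word A n (fun i : Fin n => σ i.1)) = ρ ^ n := by
  have : Nonempty (Fin m) := ⟨⟨0, hm⟩⟩
  have : Nonempty (Fin d) := ⟨⟨0, hd⟩⟩
  obtain ⟨x₀, hx₀⟩ := exists_ne (0 : Fin d → ℝ)
  have hN := hbar.1
  have hmax : ∀ x, ∃ i, ν ((A i).mulVec x) = ρ * ν x := fun x => by
    rw [hbar.2.2 x]
    exact exists_eq_ciSup_of_finite
  choose f hf using hmax
  let y : ℕ → Fin d → ℝ := fun n => Nat.rec x₀ (fun _ v => (A (f v)).mulVec v) n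
  let σ : ℕ → Fin m := fun n => f (y n)
  have hword : ∀ n, (word A n (fun i => σ i.1)).mulVec x₀ = y n := by
    intro n
    induction n with
    | zero => simp [word, y]
    | succ n ih => rw [word_succ_mulVec, ih]
  have hy : ∀ n, ν (y n) = ρ ^ n * ν x₀ := by
    intro n
    induction n with
    | zero => simp [y]
    | succ n ih =>
      calc ν (y (n + 1)) = ρ * ν (y n) := hf (y n)
        _ = ρ ^ (n + 1) * ν x₀ := by rw [ih]; ring
  refine ⟨σ, fun n _ => ?_⟩
  have hle : ∀ x : {x : Fin d → ℝ // x ≠ 0},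
      ν ((word A n (fun i => σ i.1)).mulVec x.1) / ν x.1 ≤ ρ ^ n := fun x =>
    (div_le_iff₀ (hN.pos x.2)).2 (nu_word_mulVec_le hbar σ n x.1)
  have : Nonempty {x : Fin d → ℝ // x ≠ 0} := ⟨⟨x₀, hx₀⟩⟩
  refine le_antisymm (ciSup_le hle) ?_
  refine le_ciSup_of_le ⟨ρ ^ n, Set.forall_mem_range.2 hle⟩ ⟨x₀, hx₀⟩ ?_
  rw [le_div_iff₀ (hN.pos hx₀), hword, hy]
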